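/- arXiv:2402.10281 — 2 statements merged into one kernel-verified Lean document; each statement's English description precedes it below -/
import Mathlib

section
/- Fix an integer n ≥ 2 and set h = 1/n and x_i = i·h (i = 0,…,n). Let M_h denote the space of continuous functions v : [0,1] → ℝ with v(0) = v(1) = 0 that are affine on each subinterval [x_{i−1}, x_i], and let Q_h denote the space of continuous functions v : [0,1] → ℝ with v(0) = v(1) = 0 that are polynomial of degree at most 2 on each subinterval [x_{i−1}, x_i]. Then for every ε > 0 and every u_h ∈ M_h: sup { ( ε·∫_0^1 u_h′(x)v′(x) dx + ∫_0^1 u_h′(x)v(x) dx )² / ∫_0^1 (v′(x))² dx : v ∈ Q_h, v not identically zero } = ε²·∫_0^1 (u_h′(x))² dx + ∫_0^1 u_h(x)² dx − ( ∫_0^1 u_h(x) dx )². -/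
/-!
For `v ∈ Q_h`, integration by parts and `∫ v' = 0` give
`ε ∫ u'v' + ∫ u'v = ∫ g v'` with `g = ε u' - u + ū`, where `ū = ∫ u`. Since `∫ u'u = 0` and
`∫ u' = 0`, the right-hand side of the claim is `∫ g²`, so Cauchy–Schwarz gives the upper bound.
The function `g` is piecewise affine with mean zero, hence its primitive `w` from `0` lies in `Q_h`,
and `w` attains the bound (if `g = 0` a.e., every quotient is zero instead).

Integrability is handled through `MemLp · ⊤` on `(0,1]`, and the fundamental theorem of calculus is
used in its form allowing countably many points of non-differentiability, here the mesh nodes.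
-/

/-- The space `M_h` of continuous piecewise linear functions on the uniform
mesh `x_i = i/n` of `[0,1]` vanishing at both endpoints. -/
def InMh (n : ℕ) (v : ℝ → ℝ) : Prop :=
  ContinuousOn v (Set.Icc 0 1) ∧ v 0 = 0 ∧ v 1 = 0 ∧
    ∀ i : ℕ, 1 ≤ i → i ≤ n →
      ∃ a c : ℝ, ∀ x ∈ Set.Icc (((i : ℝ) - 1) / n) ((i : ℝ) / n), v x = a * x + c

/-- The space `Q_h` of continuous piecewise quadratic functions on the uniform
mesh `x_i = i/n` of `[0,1]` vanishing at both endpoints. -/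
def InQh (n : ℕ) (v : ℝ → ℝ) : Prop :=
  ContinuousOn v (Set.Icc 0 1) ∧ v 0 = 0 ∧ v 1 = 0 ∧
    ∀ i : ℕ, 1 ≤ i → i ≤ n →
      ∃ a b c : ℝ, ∀ x ∈ Set.Icc (((i : ℝ) - 1) / n) ((i : ℝ) / n),
        v x = a * x ^ 2 + b * x + c

open MeasureTheory Set

/-- Lebesgue measure on `(0,1]`, the measure behind `∫ x in (0:ℝ)..1`. -/
noncomputable abbrev unitMeasure : Measure ℝ := volume.restrict (Ioc (0:ℝ) 1)

/-- The points `i/n`, `i ∈ ℕ`; those in `[0,1]` are the mesh nodes. -/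
def meshNodes (n : ℕ) : Set ℝ := range fun i : ℕ => (i : ℝ) / n

lemma meshNodes_countable (n : ℕ) : (meshNodes n).Countable := countable_range _

lemma exists_mesh_cell {n : ℕ} (hn : 0 < n) {x : ℝ} (hx : x ∈ Ioo (0:ℝ) 1)
    (hxs : x ∉ meshNodes n) :
    ∃ i : ℕ, 1 ≤ i ∧ i ≤ n ∧ x ∈ Ioo (((i : ℝ) - 1) / n) ((i : ℝ) / n) := by
  have hn' : (0:ℝ) < n := by exact_mod_cast hn
  have hpos : 0 < x * n := mul_pos hx.1 hn'
  refine ⟨⌈x * n⌉₊, Nat.one_le_iff_ne_zero.2 (Nat.ceil_pos.2 hpos).ne', ?_, ?_, ?_⟩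
  · refine Nat.ceil_le.2 ?_
    nlinarith [hx.2]
  · rw [div_lt_iff₀ hn']
    have := Nat.ceil_lt_add_one hpos.le
    linarith
  · refine lt_of_le_of_ne ?_ ?_
    · rw [le_div_iff₀ hn']
      exact Nat.le_ceil _
    · intro h
      exact hxs ⟨_, h.symm⟩

lemma hasDerivAt_of_quadratic {v : ℝ → ℝ} {a b c l r x : ℝ}
    (hv : ∀ y ∈ Icc l r, v y = a * y ^ 2 + b * y + c) (hx : x ∈ Ioo l r) :
    HasDerivAt v (2 * a * x + b) x := by
  have h : HasDerivAt (fun y : ℝ => a * y ^ 2 + b * y + c) (2 * a * x + b) x := by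
    have := (((hasDerivAt_id x).pow 2).const_mul a).add ((hasDerivAt_id x).const_mul b)
    refine (this.add_const c).congr_deriv ?_
    simp
    ring
  refine h.congr_of_eventuallyEq ?_
  filter_upwards [Ioo_mem_nhds hx.1 hx.2] with y hy
  exact hv y (Ioo_subset_Icc_self hy)

lemma InMh.inQh {n : ℕ} {v : ℝ → ℝ} (h : InMh n v) : InQh n v := by
  obtain ⟨h1, h2, h3, h4⟩ := h
  refine ⟨h1, h2, h3, fun i hi hin => ?_⟩
  obtain ⟨a, c, hac⟩ := h4 i hi hin
  exact ⟨0, a, c, fun x hx => by rw [hac x hx]; ring⟩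

lemma InQh.hasDerivAt {n : ℕ} (hn : 0 < n) {v : ℝ → ℝ} (h : InQh n v) {x : ℝ}
    (hx : x ∈ Ioo (0:ℝ) 1 \ meshNodes n) : HasDerivAt v (deriv v x) x := by
  obtain ⟨i, hi, hin, hxi⟩ := exists_mesh_cell hn hx.1 hx.2
  obtain ⟨a, b, c, hv⟩ := h.2.2.2 i hi hin
  exact (hasDerivAt_of_quadratic hv hxi).differentiableAt.hasDerivAt

lemma InQh.deriv_bounded {n : ℕ} (hn : 0 < n) {v : ℝ → ℝ} (h : InQh n v) :
    ∃ C : ℝ, ∀ x ∈ Ioo (0:ℝ) 1 \ meshNodes n, ‖deriv v x‖ ≤ C := by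
  have h4 : ∀ i : ℕ, ∃ a b c : ℝ, 1 ≤ i → i ≤ n →
      ∀ x ∈ Icc (((i : ℝ) - 1) / n) ((i : ℝ) / n), v x = a * x ^ 2 + b * x + c := by
    intro i
    by_cases hi : 1 ≤ i ∧ i ≤ n
    · obtain ⟨a, b, c, hv⟩ := h.2.2.2 i hi.1 hi.2
      exact ⟨a, b, c, fun _ _ => hv⟩
    · exact ⟨0, 0, 0, fun h1 h2 => absurd ⟨h1, h2⟩ hi⟩
  choose a b c hv using h4
  refine ⟨∑ i ∈ Finset.range (n + 1), (2 * |a i| + |b i|), fun x hx => ?_⟩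
  obtain ⟨i, hi, hin, hxi⟩ := exists_mesh_cell hn hx.1 hx.2
  rw [(hasDerivAt_of_quadratic (hv i hi hin) hxi).deriv]
  have hle : ‖2 * a i * x + b i‖ ≤ 2 * |a i| + |b i| := by
    have hx1 : |x| ≤ 1 := by rw [abs_of_pos hx.1.1]; exact hx.1.2.le
    calc ‖2 * a i * x + b i‖ ≤ |2 * a i * x| + |b i| := abs_add_le _ _
      _ = 2 * |a i| * |x| + |b i| := by simp [abs_mul]
      _ ≤ 2 * |a i| + |b i| := by nlinarith [abs_nonneg (a i)]
  exact hle.trans (Finset.single_le_sum (f := fun i => 2 * |a i| + |b i|)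
    (fun j _ => by positivity) (Finset.mem_range.2 (by omega)))

lemma ae_off_nodes (n : ℕ) : ∀ᵐ x ∂unitMeasure, x ∈ Ioo (0:ℝ) 1 \ meshNodes n := by
  have h1 : ∀ᵐ x ∂unitMeasure, x ∈ Ioc (0:ℝ) 1 := ae_restrict_mem measurableSet_Ioc
  have h2 : ∀ᵐ x ∂unitMeasure, x ∉ meshNodes n :=
    ae_restrict_of_ae ((meshNodes_countable n).ae_notMem _)
  have h3 : ∀ᵐ x ∂unitMeasure, x ∉ ({1} : Set ℝ) :=
    ae_restrict_of_ae ((countable_singleton _).ae_notMem _)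
  filter_upwards [h1, h2, h3] with x hx1 hx2 hx3
  exact ⟨⟨hx1.1, lt_of_le_of_ne hx1.2 hx3⟩, hx2⟩

lemma InQh.memLp_deriv {n : ℕ} (hn : 0 < n) {v : ℝ → ℝ} (h : InQh n v) :
    MemLp (deriv v) ⊤ unitMeasure := by
  obtain ⟨C, hC⟩ := h.deriv_bounded hn
  refine memLp_top_of_bound (measurable_deriv v).aestronglyMeasurable C ?_
  filter_upwards [ae_off_nodes n] with x hx using hC x hx

lemma memLp_of_continuousOn {v : ℝ → ℝ} (h : ContinuousOn v (Icc 0 1)) :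
    MemLp v ⊤ unitMeasure := by
  obtain ⟨C, hC⟩ := isCompact_Icc.exists_bound_of_continuousOn h
  refine memLp_top_of_bound
    ((h.mono Ioc_subset_Icc_self).aestronglyMeasurable measurableSet_Ioc) C ?_
  filter_upwards [ae_restrict_mem measurableSet_Ioc] with x hx
  exact hC x (Ioc_subset_Icc_self hx)

lemma memLp_top_mul {f g : ℝ → ℝ} (hf : MemLp f ⊤ unitMeasure) (hg : MemLp g ⊤ unitMeasure) :
    MemLp (fun x => f x * g x) ⊤ unitMeasure :=
  hg.mul (p := ⊤) (q := ⊤) (r := ⊤) hf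

lemma intervalIntegrable_of_memLp {f : ℝ → ℝ} (hf : MemLp f ⊤ unitMeasure) :
    IntervalIntegrable f volume 0 1 :=
  (intervalIntegrable_iff_integrableOn_Ioc_of_le zero_le_one).2 (hf.integrable le_top)

lemma integral_congr_off_nodes (n : ℕ) {f g : ℝ → ℝ}
    (h : ∀ x ∈ Ioo (0:ℝ) 1 \ meshNodes n, f x = g x) :
    ∫ x in (0:ℝ)..1, f x = ∫ x in (0:ℝ)..1, g x := by
  rw [intervalIntegral.integral_of_le zero_le_one, intervalIntegral.integral_of_le zero_le_one]
  refine integral_congr_ae ?_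
  filter_upwards [ae_off_nodes n] with x hx using h x hx

lemma InQh.integral_deriv {n : ℕ} (hn : 0 < n) {v : ℝ → ℝ} (h : InQh n v) :
    ∫ x in (0:ℝ)..1, deriv v x = 0 := by
  rw [integral_eq_of_hasDerivAt_off_countable_of_le v (deriv v) zero_le_one
    (meshNodes_countable n) h.1 (fun x hx => h.hasDerivAt hn hx)
    (intervalIntegrable_of_memLp (h.memLp_deriv hn)), h.2.1, h.2.2.1, sub_zero]

lemma InQh.integral_by_parts {n : ℕ} (hn : 0 < n) {u v : ℝ → ℝ} (hu : InQh n u)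
    (hv : InQh n v) :
    ∫ x in (0:ℝ)..1, deriv u x * v x = -∫ x in (0:ℝ)..1, u x * deriv v x := by
  have i1 := intervalIntegrable_of_memLp
    (memLp_top_mul (hu.memLp_deriv hn) (memLp_of_continuousOn hv.1))
  have i2 := intervalIntegrable_of_memLp
    (memLp_top_mul (memLp_of_continuousOn hu.1) (hv.memLp_deriv hn))
  have key := integral_eq_of_hasDerivAt_off_countable_of_le (fun x => u x * v x)
    (fun x => deriv u x * v x + u x * deriv v x) zero_le_one
    (meshNodes_countable n) (hu.1.mul hv.1)
    (fun x hx => (hu.hasDerivAt hn hx).mul (hv.hasDerivAt hn hx)) (i1.add i2)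
  rw [intervalIntegral.integral_add i1 i2, hu.2.1, hu.2.2.1] at key
  linarith

/-- The Riesz representer `g = ε u' - u + ū` of the bilinear form: `B(u, v) = ∫ g v'`. -/
noncomputable def representer (ε : ℝ) (u : ℝ → ℝ) (x : ℝ) : ℝ :=
  ε * deriv u x - u x + ∫ t in (0:ℝ)..1, u t

lemma memLp_representer {n : ℕ} (hn : 0 < n) (ε : ℝ) {u : ℝ → ℝ} (hu : InQh n u) :
    MemLp (representer ε u) ⊤ unitMeasure :=
  (((hu.memLp_deriv hn).const_mul ε).sub (memLp_of_continuousOn hu.1)).add (memLp_const _)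

lemma form_eq_integral_representer {n : ℕ} (hn : 0 < n) (ε : ℝ) {u v : ℝ → ℝ} (hu : InQh n u)
    (hv : InQh n v) :
    ε * (∫ x in (0:ℝ)..1, deriv u x * deriv v x) + ∫ x in (0:ℝ)..1, deriv u x * v x =
      ∫ x in (0:ℝ)..1, representer ε u x * deriv v x := by
  have hdv := hv.memLp_deriv hn
  have i1 := intervalIntegrable_of_memLp (memLp_top_mul (hu.memLp_deriv hn) hdv)
  have i2 := intervalIntegrable_of_memLp (memLp_top_mul (memLp_of_continuousOn hu.1) hdv)
  have i3 := intervalIntegrable_of_memLp hdv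
  have e : ∀ x, representer ε u x * deriv v x =
      ε * (deriv u x * deriv v x) - u x * deriv v x + (∫ t in (0:ℝ)..1, u t) * deriv v x := by
    intro x; unfold representer; ring
  simp_rw [e]
  rw [intervalIntegral.integral_add ((i1.const_mul _).sub i2) (i3.const_mul _),
    intervalIntegral.integral_sub (i1.const_mul _) i2, intervalIntegral.integral_const_mul,
    intervalIntegral.integral_const_mul, hv.integral_deriv hn, hu.integral_by_parts hn hv]
  ring

lemma integral_representer_sq {n : ℕ} (hn : 0 < n) (ε : ℝ) {u : ℝ → ℝ} (hu : InQh n u) :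
    ∫ x in (0:ℝ)..1, (representer ε u x) ^ 2 =
      ε ^ 2 * (∫ x in (0:ℝ)..1, (deriv u x) ^ 2) + (∫ x in (0:ℝ)..1, (u x) ^ 2) -
        (∫ x in (0:ℝ)..1, u x) ^ 2 := by
  have mu := memLp_of_continuousOn hu.1
  have md := hu.memLp_deriv hn
  have hparts := hu.integral_by_parts hn hu
  have hcross : ∫ x in (0:ℝ)..1, deriv u x * u x = 0 := by
    have : ∫ x in (0:ℝ)..1, u x * deriv u x = ∫ x in (0:ℝ)..1, deriv u x * u x := by
      simp_rw [mul_comm]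
    linarith
  have i1 := intervalIntegrable_of_memLp (memLp_top_mul md md)
  have i2 := intervalIntegrable_of_memLp (memLp_top_mul mu mu)
  have i3 := intervalIntegrable_of_memLp (memLp_top_mul md mu)
  have i4 := intervalIntegrable_of_memLp md
  have i5 := intervalIntegrable_of_memLp mu
  have i6 : IntervalIntegrable (fun _ : ℝ => (∫ t in (0:ℝ)..1, u t) ^ 2) volume 0 1 :=
    intervalIntegrable_const
  simp_rw [pow_two (deriv u _), pow_two (u _)]
  set m := ∫ t in (0:ℝ)..1, u t with hm
  have e : ∀ x, representer ε u x ^ 2 = ε ^ 2 * (deriv u x * deriv u x) + u x * u x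
      - 2 * ε * (deriv u x * u x) + 2 * ε * m * deriv u x - 2 * m * u x + m ^ 2 := by
    intro x; unfold representer; ring
  simp_rw [e]
  rw [intervalIntegral.integral_add
      ((((((i1.const_mul _).add i2).sub (i3.const_mul _)).add (i4.const_mul _)).sub
        (i5.const_mul _))) i6,
    intervalIntegral.integral_sub
      (((((i1.const_mul _).add i2).sub (i3.const_mul _)).add (i4.const_mul _))) (i5.const_mul _),
    intervalIntegral.integral_add
      ((((i1.const_mul _).add i2).sub (i3.const_mul _))) (i4.const_mul _),
    intervalIntegral.integral_sub ((i1.const_mul _).add i2) (i3.const_mul _),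
    intervalIntegral.integral_add (i1.const_mul _) i2]
  simp only [intervalIntegral.integral_const_mul, intervalIntegral.integral_const, hcross,
    hu.integral_deriv hn, ← hm]
  simp
  ring

lemma integral_mul_sq_le {f g : ℝ → ℝ} (hf : MemLp f ⊤ unitMeasure)
    (hg : MemLp g ⊤ unitMeasure) :
    (∫ x in (0:ℝ)..1, f x * g x) ^ 2 ≤
      (∫ x in (0:ℝ)..1, (f x) ^ 2) * ∫ x in (0:ℝ)..1, (g x) ^ 2 := by
  simp_rw [pow_two (f _), pow_two (g _)]
  have i1 := intervalIntegrable_of_memLp (memLp_top_mul hf hf)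
  have i2 := intervalIntegrable_of_memLp (memLp_top_mul hf hg)
  have i3 := intervalIntegrable_of_memLp (memLp_top_mul hg hg)
  -- The quadratic polynomial `t ↦ ∫ (f + t g)²` is nonnegative, so its discriminant is not positive.
  have key : ∀ t : ℝ, 0 ≤ (∫ x in (0:ℝ)..1, g x * g x) * (t * t) +
      (2 * ∫ x in (0:ℝ)..1, f x * g x) * t + ∫ x in (0:ℝ)..1, f x * f x := by
    intro t
    have h0 : 0 ≤ ∫ x in (0:ℝ)..1, (f x + t * g x) ^ 2 :=
      intervalIntegral.integral_nonneg zero_le_one fun x _ => sq_nonneg _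
    have e : ∀ x, (f x + t * g x) ^ 2 =
        t * t * (g x * g x) + 2 * t * (f x * g x) + f x * f x := by
      intro x; ring
    simp_rw [e] at h0
    rw [intervalIntegral.integral_add ((i3.const_mul _).add (i2.const_mul _)) i1,
      intervalIntegral.integral_add (i3.const_mul _) (i2.const_mul _),
      intervalIntegral.integral_const_mul, intervalIntegral.integral_const_mul] at h0
    linarith
  have := discrim_le_zero key
  unfold discrim at this
  nlinarith

/-- The primitive of `g = ε u' - u + ū` vanishing at `0` is piecewise quadratic when `u` is
piecewise affine, and vanishes at `1` because `g` has mean zero. -/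
lemma exists_optimal_test {n : ℕ} (hn : 0 < n) (ε : ℝ) {u : ℝ → ℝ} (hu : InMh n u) :
    ∃ w, InQh n w ∧ ∀ x ∈ Ioo (0:ℝ) 1 \ meshNodes n, deriv w x = representer ε u x := by
  have hn' : (0:ℝ) < n := by exact_mod_cast hn
  -- A globally continuous extension of `u`, so that its primitive is differentiable everywhere.
  set U : ℝ → ℝ := IccExtend (zero_le_one : (0:ℝ) ≤ 1) ((Icc 0 1).domRestrict u) with hU
  have hUc : Continuous U := (continuousOn_iff_continuous_domRestrict.1 hu.1).Icc_extend'
  have hUe : ∀ x ∈ Icc (0:ℝ) 1, U x = u x := fun x hx => by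
    rw [hU, IccExtend_of_mem _ _ hx]; rfl
  have hUi : ∀ a b, IntervalIntegrable U volume a b := fun a b => hUc.intervalIntegrable a b
  have hP : ∀ x, HasDerivAt (fun y => ∫ t in (0:ℝ)..y, U t) (U x) x := fun x =>
    intervalIntegral.integral_hasDerivAt_right (hUi _ _)
      (hUc.stronglyMeasurableAtFilter _ _) hUc.continuousAt
  have hmean : ∫ t in (0:ℝ)..1, U t = ∫ t in (0:ℝ)..1, u t :=
    intervalIntegral.integral_congr fun x hx => hUe x (by rwa [uIcc_of_le zero_le_one] at hx)
  set m := ∫ t in (0:ℝ)..1, u t with hm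
  refine ⟨fun x => ε * u x - (∫ t in (0:ℝ)..x, U t) + m * x, ⟨?_, ?_, ?_, ?_⟩, ?_⟩
  · have hPc : Continuous fun y => ∫ t in (0:ℝ)..y, U t :=
      continuous_iff_continuousAt.2 fun x => (hP x).continuousAt
    exact ((hu.1.const_mul ε).sub hPc.continuousOn).add (by fun_prop)
  · simp [hu.2.1]
  · simp [hu.2.2.1, hmean]
  · intro i hi hin
    obtain ⟨a, c, hac⟩ := hu.2.2.2 i hi hin
    set l : ℝ := ((i : ℝ) - 1) / n with hl
    have hi' : (1:ℝ) ≤ i := by exact_mod_cast hi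
    have hin' : (i:ℝ) ≤ n := by exact_mod_cast hin
    have hl0 : 0 ≤ l := div_nonneg (by linarith) hn'.le
    have hr1 : (i : ℝ) / n ≤ 1 := (div_le_one hn').2 hin'
    refine ⟨-a / 2, ε * a - c + m,
      ε * c - (∫ t in (0:ℝ)..l, U t) + a / 2 * l ^ 2 + c * l, fun x hx => ?_⟩
    have hcell : ∫ t in l..x, U t = ∫ t in l..x, (a * t + c) := by
      refine intervalIntegral.integral_congr fun t ht => ?_
      rw [uIcc_of_le hx.1] at ht
      have ht' : t ∈ Icc l ((i : ℝ) / n) := ⟨ht.1, ht.2.trans hx.2⟩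
      exact (hUe t ⟨hl0.trans ht'.1, ht'.2.trans hr1⟩).trans (hac t ht')
    have hpoly : ∫ t in l..x, (a * t + c) = a * ((x ^ 2 - l ^ 2) / 2) + c * (x - l) := by
      rw [intervalIntegral.integral_add (Continuous.intervalIntegrable (by fun_prop) _ _)
        (Continuous.intervalIntegrable (by fun_prop) _ _), intervalIntegral.integral_const_mul,
        integral_id, intervalIntegral.integral_const, smul_eq_mul]
      ring
    have hsplit := intervalIntegral.integral_add_adjacent_intervals (hUi 0 l) (hUi l x)
    show ε * u x - (∫ t in (0:ℝ)..x, U t) + m * x = _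
    rw [← hsplit, hcell, hpoly, hac x hx]
    ring
  · intro x hx
    have h := (((hu.inQh.hasDerivAt hn hx).const_mul ε).sub (hP x)).add
      ((hasDerivAt_id x).const_mul m)
    rw [hUe x (Ioo_subset_Icc_self hx.1), mul_one] at h
    exact h.deriv

lemma inQh_bubble (n : ℕ) : InQh n fun x => x * (1 - x) :=
  ⟨by fun_prop, by simp, by simp, fun _ _ _ => ⟨-1, 1, 0, fun x _ => by ring⟩⟩

/-- For the `P¹` trial space and `P²` test space, the discrete
optimal trial norm coincides with the continuous optimal trial norm:
`sup_{v ∈ Q_h, v ≠ 0} (ε∫u_h'v' + ∫u_h'v)²/∫(v')² = ε²|u_h|² + ‖u_h‖² - ū_h²`. -/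
theorem stmt10 (n : ℕ) (hn : 2 ≤ n) (ε : ℝ) (hε : 0 < ε)
    (uh : ℝ → ℝ) (huh : InMh n uh) :
    sSup { r : ℝ | ∃ v : ℝ → ℝ, InQh n v ∧ (∃ x ∈ Set.Icc (0:ℝ) 1, v x ≠ 0) ∧
        r = (ε * (∫ x in (0:ℝ)..1, deriv uh x * deriv v x) +
              ∫ x in (0:ℝ)..1, deriv uh x * v x)^2 /
            ∫ x in (0:ℝ)..1, (deriv v x)^2 } =
      ε^2 * (∫ x in (0:ℝ)..1, (deriv uh x)^2) +
        (∫ x in (0:ℝ)..1, (uh x)^2) - (∫ x in (0:ℝ)..1, uh x)^2 := by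
  have hn0 : 0 < n := by omega
  have hu := huh.inQh
  rw [← integral_representer_sq hn0 ε hu]
  have mg := memLp_representer hn0 ε hu
  set G := ∫ x in (0:ℝ)..1, (representer ε uh x) ^ 2 with hG
  have hG0 : 0 ≤ G := intervalIntegral.integral_nonneg zero_le_one fun x _ => sq_nonneg _
  have hD0 : ∀ v : ℝ → ℝ, 0 ≤ ∫ x in (0:ℝ)..1, (deriv v x) ^ 2 := fun v =>
    intervalIntegral.integral_nonneg zero_le_one fun x _ => sq_nonneg _
  have hbound : ∀ v, InQh n v → (ε * (∫ x in (0:ℝ)..1, deriv uh x * deriv v x) +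
      ∫ x in (0:ℝ)..1, deriv uh x * v x) ^ 2 / (∫ x in (0:ℝ)..1, (deriv v x) ^ 2) ≤ G := by
    intro v hv
    rw [form_eq_integral_representer hn0 ε hu hv]
    exact div_le_of_le_mul₀ (hD0 v) hG0 (integral_mul_sq_le mg (hv.memLp_deriv hn0))
  refine IsGreatest.csSup_eq ⟨?_, ?_⟩
  · by_cases hGz : G = 0
    · -- All quotients lie in `[0, G] = {0}`, so any nonzero test function will do.
      refine ⟨_, inQh_bubble n, ⟨1 / 2, by norm_num, by norm_num⟩, ?_⟩
      refine le_antisymm ?_ (hbound _ (inQh_bubble n))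
      rw [hGz]
      exact div_nonneg (sq_nonneg _) (hD0 _)
    · obtain ⟨w, hw, hwd⟩ := exists_optimal_test hn0 ε huh
      have hDG : ∫ x in (0:ℝ)..1, (deriv w x) ^ 2 = G :=
        integral_congr_off_nodes n fun x hx => by rw [hwd x hx]
      refine ⟨w, hw, ?_, ?_⟩
      · by_contra! hzero
        apply hGz
        rw [← hDG, integral_congr_off_nodes n (g := fun _ => 0), intervalIntegral.integral_zero]
        intro x hx
        have : w =ᶠ[nhds x] fun _ => 0 := by
          filter_upwards [Ioo_mem_nhds hx.1.1 hx.1.2] with y hy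
          exact hzero y (Ioo_subset_Icc_self hy)
        rw [this.deriv_eq]
        simp
      · have hBG : ∫ x in (0:ℝ)..1, representer ε uh x * deriv w x = G :=
          integral_congr_off_nodes n fun x hx => by rw [hwd x hx, pow_two]
        rw [form_eq_integral_representer hn0 ε hu hw, hBG, hDG]
        field_simp
  · rintro r ⟨v, hv, -, rfl⟩
    exact hbound v hv
end

section
/- Fix an integer n ≥ 2 and set h = 1/n and x_i = i·h (i = 0,…,n). Let M_h denote the space of continuous functions v : [0,1] → ℝ with v(0) = v(1) = 0 that are affine on each subinterval [x_{i−1}, x_i]. Let B : [0,h] → ℝ be continuously differentiable with B(0) = B(h) = 0, ∫_0^h B(x) dx = b₁·h and ∫_0^h (B′(x))² dx = b₂/h, where b₁ > 0 and b₂ > 0. For i = 1,…,n define B_i : [0,1] → ℝ by B_i(x) = B(x − x_{i−1}) for x ∈ [x_{i−1}, x_i] and B_i(x) = 0 otherwise. Let ε > 0, let u_h, w_h ∈ M_h, and set v_h := w_h + Σ_{i=1}^n (w_h(x_i) − w_h(x_{i−1}))·B_i. Then ε·∫_0^1 u_h′(x)v_h′(x) dx + ∫_0^1 u_h′(x)v_h(x)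 dx = (ε + b₁·h)·∫_0^1 u_h′(x)w_h′(x) dx + ∫_0^1 u_h′(x)w_h(x) dx. -/
/-- The bubble `B_i` supported on `[x_{i-1}, x_i]`, obtained by translating `B`. -/
noncomputable def bubbleI (n : ℕ) (B : ℝ → ℝ) (i : ℕ) : ℝ → ℝ := fun x =>
  if x ∈ Set.Icc (((i : ℝ) - 1) / n) ((i : ℝ) / n) then B (x - ((i : ℝ) - 1) / n) else 0

/-- The bubble modification `w + Σ_{i=1}^n (w(x_i) - w(x_{i-1})) B_i` of `w`. -/
noncomputable def bubbleMod (n : ℕ) (B : ℝ → ℝ) (w : ℝ → ℝ) : ℝ → ℝ := fun x =>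
  w x + ∑ i ∈ Finset.Icc 1 n, (w ((i : ℝ) / n) - w (((i : ℝ) - 1) / n)) * bubbleI n B i x

open MeasureTheory

/-- A function agreeing in the interior of `[a, b]` with a function continuous on `[a, b]` is
integrable there, with the same integral; the values at the nodes, where `deriv` may be junk,
are irrelevant. -/
lemma integral_of_eq_interior {f g : ℝ → ℝ} {a b : ℝ} (hab : a ≤ b)
    (hg : ContinuousOn g (Set.Icc a b)) (hfg : ∀ x ∈ Set.Ioo a b, f x = g x) :
    IntervalIntegrable f volume a b ∧ ∫ x in a..b, f x = ∫ x in a..b, g x := by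
  have hi : IntervalIntegrable g volume a b := hg.intervalIntegrable_of_Icc hab
  have hae : g =ᵐ[volume.restrict (Set.uIoc a b)] f := by
    rw [Set.uIoc_of_le hab, ← restrict_Ioo_eq_restrict_Ioc]
    exact (ae_restrict_iff' measurableSet_Ioo).2 (.of_forall fun x hx => (hfg x hx).symm)
  exact ⟨hi.congr_ae hae, (intervalIntegral.integral_congr_ae_restrict hae).symm⟩

/-- The form in which membership in `M_h` is used on the cell with left endpoint `k/n`. -/
lemma InMh.cell {n : ℕ} {v : ℝ → ℝ} (hv : InMh n v) {k : ℕ} (hk : k < n) :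
    ∃ a c : ℝ, ∀ x ∈ Set.Icc ((k : ℝ) / n) (((k + 1 : ℕ) : ℝ) / n), v x = a * x + c := by
  obtain ⟨a, c, h⟩ := hv.2.2.2 (k + 1) (by omega) hk
  refine ⟨a, c, fun x hx => h x ?_⟩
  simpa using hx

lemma deriv_of_affine {v : ℝ → ℝ} {a c l r : ℝ}
    (h : ∀ x ∈ Set.Icc l r, v x = a * x + c) {x : ℝ} (hx : x ∈ Set.Ioo l r) :
    deriv v x = a := by
  have hev : v =ᶠ[nhds x] fun y => a * y + c :=
    Filter.eventually_of_mem (Ioo_mem_nhds hx.1 hx.2) fun y hy => h y (Set.Ioo_subset_Icc_self hy)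
  rw [hev.deriv_eq]
  simp

/-- In the interior of a cell only the bubble of that cell is present, and its coefficient is the
increment `a / n` of `w`. -/
lemma bubbleMod_cell {n : ℕ} (B : ℝ → ℝ) {w : ℝ → ℝ} {a c : ℝ} {k : ℕ} (hk : k < n)
    (h : ∀ x ∈ Set.Icc ((k : ℝ) / n) (((k + 1 : ℕ) : ℝ) / n), w x = a * x + c)
    {x : ℝ} (hx : x ∈ Set.Ioo ((k : ℝ) / n) (((k + 1 : ℕ) : ℝ) / n)) :
    bubbleMod n B w x = a * x + c + a / n * B (x - k / n) := by
  have hn : (0 : ℝ) < n := by exact_mod_cast (by omega : 0 < n)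
  have hle : (k : ℝ) / n ≤ ((k + 1 : ℕ) : ℝ) / n := (hx.1.trans hx.2).le
  unfold bubbleMod
  rw [h x (Set.Ioo_subset_Icc_self hx), Finset.sum_eq_single (k + 1)]
  · have h1 : (((k + 1 : ℕ) : ℝ) - 1) / n = k / n := by push_cast; ring
    unfold bubbleI
    rw [h1, if_pos (Set.Ioo_subset_Icc_self hx), h _ (Set.right_mem_Icc.2 hle),
      h _ (Set.left_mem_Icc.2 hle)]
    push_cast
    ring
  · intro i _ hi
    unfold bubbleI
    rw [if_neg, mul_zero]
    rintro ⟨h1, h2⟩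
    have h3 := hx.1.trans_le h2
    have h4 := h1.trans_lt hx.2
    rw [div_lt_div_iff_of_pos_right hn] at h3 h4
    have h5 : k < i := by exact_mod_cast h3
    have h6 : i < k + 2 := by
      have : (i : ℝ) < (k : ℝ) + 2 := by push_cast at h4; linarith
      exact_mod_cast this
    omega
  · intro hk'
    exact absurd (Finset.mem_Icc.2 ⟨by omega, hk⟩) hk'

lemma mem_shift {n k : ℕ} {x : ℝ}
    (hx : x ∈ Set.Icc ((k : ℝ) / n) (((k + 1 : ℕ) : ℝ) / n)) :
    x - k / n ∈ Set.Icc (0 : ℝ) (1 / n) := by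
  have h : ((k + 1 : ℕ) : ℝ) / n = k / n + 1 / n := by push_cast; ring
  rw [h] at hx
  exact ⟨by linarith [hx.1], by linarith [hx.2]⟩

lemma continuousOn_shift {n k : ℕ} {g : ℝ → ℝ} (hg : ContinuousOn g (Set.Icc 0 (1 / n))) :
    ContinuousOn (fun x => g (x - k / n)) (Set.Icc ((k : ℝ) / n) (((k + 1 : ℕ) : ℝ) / n)) :=
  hg.comp (by fun_prop) fun _ hx => mem_shift hx

lemma integral_shift (n k : ℕ) (g : ℝ → ℝ) :
    ∫ x in ((k : ℝ) / n)..(((k + 1 : ℕ) : ℝ) / n), g (x - k / n) = ∫ x in (0 : ℝ)..(1 / n), g x := by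
  rw [intervalIntegral.integral_comp_sub_right]
  congr 1 <;> (push_cast; ring)

lemma cell_le (n k : ℕ) : (k : ℝ) / n ≤ ((k + 1 : ℕ) : ℝ) / n := by
  gcongr
  omega

lemma cell_deriv {n k : ℕ} (hk : k < n) {B B' u w : ℝ → ℝ} (hu : InMh n u) (hw : InMh n w)
    (hB : ∀ x ∈ Set.Icc (0:ℝ) (1 / n), HasDerivWithinAt B (B' x) (Set.Icc 0 (1 / n)) x)
    (hB' : ContinuousOn B' (Set.Icc 0 (1 / n))) (hB0 : B 0 = 0) (hBh : B (1 / n) = 0) :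
    IntervalIntegrable (fun x => deriv u x * deriv (bubbleMod n B w) x) volume
        ((k : ℝ) / n) (((k + 1 : ℕ) : ℝ) / n) ∧
      IntervalIntegrable (fun x => deriv u x * deriv w x) volume
        ((k : ℝ) / n) (((k + 1 : ℕ) : ℝ) / n) ∧
      ∫ x in ((k : ℝ) / n)..(((k + 1 : ℕ) : ℝ) / n), deriv u x * deriv (bubbleMod n B w) x =
        ∫ x in ((k : ℝ) / n)..(((k + 1 : ℕ) : ℝ) / n), deriv u x * deriv w x := by
  obtain ⟨α, c, hα⟩ := hu.cell hk
  obtain ⟨β, d, hβ⟩ := hw.cell hk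
  have hle := cell_le n k
  have hpos : (0 : ℝ) ≤ 1 / n := by positivity
  have hBzero : ∫ x in (0 : ℝ)..(1 / n), B' x = 0 := by
    rw [intervalIntegral.integral_eq_sub_of_hasDerivAt_of_le hpos
      (fun x hx => (hB x hx).continuousWithinAt)
      (fun x hx => (hB x (Set.Ioo_subset_Icc_self hx)).hasDerivAt (Icc_mem_nhds hx.1 hx.2))
      (hB'.intervalIntegrable_of_Icc hpos), hB0, hBh, sub_zero]
  have hsh := continuousOn_shift (k := k) hB'
  have hderiv : ∀ x ∈ Set.Ioo ((k : ℝ) / n) (((k + 1 : ℕ) : ℝ) / n),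
      deriv (bubbleMod n B w) x = β + β / n * B' (x - k / n) := by
    intro x hx
    have hev : bubbleMod n B w =ᶠ[nhds x] fun y => β * y + d + β / n * B (y - k / n) :=
      Filter.eventually_of_mem (Ioo_mem_nhds hx.1 hx.2) fun y hy => bubbleMod_cell B hk hβ hy
    have hint : x - k / n ∈ Set.Ioo (0 : ℝ) (1 / n) := by
      have h : ((k + 1 : ℕ) : ℝ) / n = k / n + 1 / n := by push_cast; ring
      rw [h] at hx
      exact ⟨by linarith [hx.1], by linarith [hx.2]⟩
    have hBat : HasDerivAt B (B' (x - k / n)) (x - k / n) :=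
      (hB _ (Set.Ioo_subset_Icc_self hint)).hasDerivAt (Icc_mem_nhds hint.1 hint.2)
    have hlin : HasDerivAt (fun y : ℝ => β * y + d) β x := by
      simpa using ((hasDerivAt_id x).const_mul β).add_const d
    rw [hev.deriv_eq]
    exact (hlin.add ((hBat.comp_sub_const x (k / n)).const_mul (β / n))).deriv
  obtain ⟨i1, e1⟩ := integral_of_eq_interior
    (f := fun x => deriv u x * deriv (bubbleMod n B w) x)
    (g := fun x => α * β + α * β / n * B' (x - k / n)) hle
    (continuousOn_const.add (continuousOn_const.mul hsh))
    (fun x hx => by simp only [deriv_of_affine hα hx, hderiv x hx]; ring)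
  obtain ⟨i2, e2⟩ := integral_of_eq_interior
    (f := fun x => deriv u x * deriv w x) (g := fun _ => α * β) hle (by fun_prop)
    (fun x hx => by simp only [deriv_of_affine hα hx, deriv_of_affine hβ hx])
  refine ⟨i1, i2, ?_⟩
  rw [e1, e2, intervalIntegral.integral_add (by simp)
    ((hsh.intervalIntegrable_of_Icc hle).const_mul _), intervalIntegral.integral_const_mul _
    (fun x => B' (x - k / n)), integral_shift n k B', hBzero, mul_zero, add_zero]

lemma cell_value {n k : ℕ} (hk : k < n) {B u w : ℝ → ℝ} {b₁ : ℝ} (hu : InMh n u) (hw : InMh n w)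
    (hB : ContinuousOn B (Set.Icc 0 (1 / n)))
    (hBint : ∫ x in (0:ℝ)..(1 / n), B x = b₁ * (1 / n)) :
    IntervalIntegrable (fun x => deriv u x * bubbleMod n B w x) volume
        ((k : ℝ) / n) (((k + 1 : ℕ) : ℝ) / n) ∧
      IntervalIntegrable (fun x => deriv u x * w x) volume
        ((k : ℝ) / n) (((k + 1 : ℕ) : ℝ) / n) ∧
      ∫ x in ((k : ℝ) / n)..(((k + 1 : ℕ) : ℝ) / n), deriv u x * bubbleMod n B w x =
        b₁ * (1 / n) * (∫ x in ((k : ℝ) / n)..(((k + 1 : ℕ) : ℝ) / n), deriv u x * deriv w x) +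
        ∫ x in ((k : ℝ) / n)..(((k + 1 : ℕ) : ℝ) / n), deriv u x * w x := by
  obtain ⟨α, c, hα⟩ := hu.cell hk
  obtain ⟨β, d, hβ⟩ := hw.cell hk
  have hle := cell_le n k
  have hsh := continuousOn_shift (k := k) hB
  have hcont : ContinuousOn (fun x : ℝ => α * (β * x + d))
      (Set.Icc ((k : ℝ) / n) (((k + 1 : ℕ) : ℝ) / n)) := by fun_prop
  obtain ⟨i1, e1⟩ := integral_of_eq_interior
    (f := fun x => deriv u x * bubbleMod n B w x)
    (g := fun x => α * (β * x + d) + α * β / n * B (x - k / n)) hle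
    (hcont.add (continuousOn_const.mul hsh))
    (fun x hx => by simp only [deriv_of_affine hα hx, bubbleMod_cell B hk hβ hx]; ring)
  obtain ⟨i2, e2⟩ := integral_of_eq_interior
    (f := fun x => deriv u x * deriv w x) (g := fun _ => α * β) hle (by fun_prop)
    (fun x hx => by simp only [deriv_of_affine hα hx, deriv_of_affine hβ hx])
  obtain ⟨i3, e3⟩ := integral_of_eq_interior
    (f := fun x => deriv u x * w x) hle hcont
    (fun x hx => by simp only [deriv_of_affine hα hx, hβ x (Set.Ioo_subset_Icc_self hx)])
  refine ⟨i1, i3, ?_⟩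
  rw [e1, e2, e3, intervalIntegral.integral_add (hcont.intervalIntegrable_of_Icc hle)
    ((hsh.intervalIntegrable_of_Icc hle).const_mul _), intervalIntegral.integral_const_mul _
    (fun x => B (x - k / n)), integral_shift n k B, hBint, intervalIntegral.integral_const,
    smul_eq_mul]
  push_cast
  ring

lemma integral_eq_sum_cells {n : ℕ} (hn : n ≠ 0) {f : ℝ → ℝ}
    (hf : ∀ k < n, IntervalIntegrable f volume ((k : ℝ) / n) (((k + 1 : ℕ) : ℝ) / n)) :
    ∫ x in (0 : ℝ)..1, f x =
      ∑ k ∈ Finset.range n, ∫ x in ((k : ℝ) / n)..(((k + 1 : ℕ) : ℝ) / n), f x := by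
  have hn' : (n : ℝ) ≠ 0 := by exact_mod_cast hn
  rw [intervalIntegral.sum_integral_adjacent_intervals (a := fun k : ℕ => (k : ℝ) / n) hf]
  simp [hn']

/-- The upwinding effect of the bubble modification of the test
space: for `u_h, w_h ∈ M_h` and `v_h = w_h + Σ (w_h(x_i) - w_h(x_{i-1}))B_i`,
`ε∫u_h'v_h' + ∫u_h'v_h = (ε + b₁h)∫u_h'w_h' + ∫u_h'w_h`. -/
theorem stmt11 (n : ℕ) (hn : 2 ≤ n)
    (B B' : ℝ → ℝ) (b₁ b₂ : ℝ) (hb₁ : 0 < b₁) (hb₂ : 0 < b₂)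
    (hB : ∀ x ∈ Set.Icc (0:ℝ) (1 / n), HasDerivWithinAt B (B' x) (Set.Icc 0 (1 / n)) x)
    (hB' : ContinuousOn B' (Set.Icc 0 (1 / n)))
    (hB0 : B 0 = 0) (hBh : B (1 / n) = 0)
    (hBint : ∫ x in (0:ℝ)..(1 / n), B x = b₁ * (1 / n))
    (hB'int : ∫ x in (0:ℝ)..(1 / n), (B' x)^2 = b₂ / (1 / n))
    (ε : ℝ) (hε : 0 < ε)
    (uh wh : ℝ → ℝ) (huh : InMh n uh) (hwh : InMh n wh) :
    ε * (∫ x in (0:ℝ)..1, deriv uh x * deriv (bubbleMod n B wh) x) +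
        (∫ x in (0:ℝ)..1, deriv uh x * bubbleMod n B wh x) =
      (ε + b₁ * (1 / n)) * (∫ x in (0:ℝ)..1, deriv uh x * deriv wh x) +
        (∫ x in (0:ℝ)..1, deriv uh x * wh x) := by
  have hn0 : n ≠ 0 := by omega
  have hBc : ContinuousOn B (Set.Icc 0 (1 / n)) := fun x hx => (hB x hx).continuousWithinAt
  have hd := fun (k : ℕ) (hk : k < n) => cell_deriv hk huh hwh hB hB' hB0 hBh
  have hv := fun (k : ℕ) (hk : k < n) => cell_value hk huh hwh hBc hBint
  have e1 : ∫ x in (0:ℝ)..1, deriv uh x * deriv (bubbleMod n B wh) x =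
      ∫ x in (0:ℝ)..1, deriv uh x * deriv wh x := by
    rw [integral_eq_sum_cells hn0 fun k hk => (hd k hk).1,
      integral_eq_sum_cells hn0 fun k hk => (hd k hk).2.1]
    exact Finset.sum_congr rfl fun k hk => (hd k (Finset.mem_range.1 hk)).2.2
  have e2 : ∫ x in (0:ℝ)..1, deriv uh x * bubbleMod n B wh x =
      b₁ * (1 / n) * (∫ x in (0:ℝ)..1, deriv uh x * deriv wh x) +
        ∫ x in (0:ℝ)..1, deriv uh x * wh x := by
    rw [integral_eq_sum_cells hn0 fun k hk => (hv k hk).1,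
      integral_eq_sum_cells hn0 fun k hk => (hd k hk).2.1,
      integral_eq_sum_cells hn0 fun k hk => (hv k hk).2.1, Finset.mul_sum,
      ← Finset.sum_add_distrib]
    exact Finset.sum_congr rfl fun k hk => (hv k (Finset.mem_range.1 hk)).2.2
  rw [e1, e2]
  ring
end
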